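/- Let $G$ be a group and suppose that the group ring $F[G]$ is stably finite for every finite field $F$. Then for every algebraically closed field $K$ of characteristic $0$, the group ring $K[G]$ is stably finite. -/

import Mathlib

/-- A ring `R` is stably finite if for every `d ≥ 1` and all `d × d` matrices `A B` over `R`,
`A * B = 1` implies `B * A = 1`. -/
def IsStablyFinite (R : Type*) [Ring R] : Prop :=
  ∀ d : ℕ, 1 ≤ d → ∀ A B : Matrix (Fin d) (Fin d) R, A * B = 1 → B * A = 1

/-!
The coefficients of two matrices over `K[G]` generate a subring `S ⊆ K` of finite type over `ℤ`, so
`K` may be replaced by `S`. If `A * B = 1` over `S[G]`, then `1 - B * A` is idempotent. For each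
maximal ideal `m` of `S` the field `S ⧸ m` is finite (Zariski's lemma over `ℤ`), so `1 - B * A`
vanishes modulo `m` by assumption. Its coefficients thus lie in the Jacobson radical of `S`. The
ideal `I` they generate is finitely generated, and `I ≤ I * I` by idempotency, so `I = 0` by
Nakayama's lemma.
-/

open Module

theorem isJacobsonRing_int : IsJacobsonRing ℤ := by
  refine isJacobsonRing_iff_prime_eq.mpr fun P hP ↦ ?_
  rcases eq_or_ne P ⊥ with rfl | hbot
  · refine le_antisymm (fun n hn ↦ ?_) Ideal.le_jacobson
    have hunit : IsUnit (n * n + 1) := Ideal.mem_jacobson_bot.mp hn n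
    rw [Ideal.mem_bot]
    rcases Int.isUnit_iff.mp hunit with h | h <;> nlinarith
  · have := hP.isMaximal hbot
    exact Ideal.jacobson_eq_self_of_isMaximal

theorem finite_of_field_of_finiteType_int {F : Type*} [Field F] (hF : Algebra.FiniteType ℤ F) :
    Finite F := by
  have := isJacobsonRing_int
  have : Module.Finite ℤ F := finite_of_finite_type_of_isJacobsonRing ℤ F
  obtain ⟨p, _⟩ := CharP.exists F
  rcases eq_or_ne p 0 with rfl | hp
  · have := CharP.charP_to_charZero F
    have : IsField ℤ := isField_of_isIntegral_of_isField (algebraMap ℤ F).injective_int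
      (Field.toIsField F)
    exact absurd this Int.not_isField
  · have hp' : (p : ℤ) ∈ nonZeroDivisors ℤ := mem_nonZeroDivisors_of_ne_zero (mod_cast hp)
    exact Module.finite_of_fg_torsion F fun x ↦ ⟨⟨p, hp'⟩, by simp [Submonoid.smul_def]⟩

theorem exists_ringHom_finite_field_ne_zero {S : Type*} [CommRing S] [Algebra.FiniteType ℤ S]
    {c : S} (hc : c ∉ (⊥ : Ideal S).jacobson) :
    ∃ (F : Type) (_ : Field F) (_ : Finite F) (f : S →+* F), f c ≠ 0 := by
  obtain ⟨m, hm, hcm⟩ : ∃ m : Ideal S, m.IsMaximal ∧ c ∉ m := by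
    simpa [Ideal.jacobson, Ideal.mem_sInf] using hc
  let : Field (S ⧸ m) := Ideal.Quotient.field m
  have : Finite (S ⧸ m) := finite_of_field_of_finiteType_int <|
    .of_surjective (Ideal.Quotient.mk m).toIntAlgHom Ideal.Quotient.mk_surjective
  -- `S ⧸ m` lives in the universe of `S`; being finite, it has a copy in `Type`.
  let e : S ⧸ m ≃+* Shrink.{0} (S ⧸ m) := (Shrink.ringEquiv.{0} (S ⧸ m)).symm
  refine ⟨Shrink.{0} (S ⧸ m), inferInstance, inferInstance,
    e.toRingHom.comp (Ideal.Quotient.mk m), ?_⟩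
  simpa [Ideal.Quotient.eq_zero_iff_mem] using hcm

section Idempotent

variable {ι R A : Type*} [CommRing R] [Ring A] [Algebra R A] (b : Basis ι R A)

theorem basis_repr_mul_mem_mul {I J : Ideal R} {x y : A} (hx : ∀ i, b.repr x i ∈ I)
    (hy : ∀ i, b.repr y i ∈ J) (k : ι) : b.repr (x * y) k ∈ I * J := by
  have hxy : x * y =
      ∑ i ∈ (b.repr x).support, ∑ j ∈ (b.repr y).support,
        (b.repr x i * b.repr y j) • (b i * b j) := by
    conv_lhs => rw [← b.linearCombination_repr x, ← b.linearCombination_repr y]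
    simp only [Finsupp.linearCombination_apply, Finsupp.sum, Finset.sum_mul_sum,
      smul_mul_smul_comm]
  simp only [hxy, map_sum, map_smul, Finsupp.finsetSum_apply, Finsupp.smul_apply, smul_eq_mul]
  exact sum_mem fun i _ ↦ sum_mem fun j _ ↦
    Ideal.mul_mem_right _ _ (Ideal.mul_mem_mul (hx i) (hy j))

theorem eq_zero_of_isIdempotentElem_of_basis_repr_mem_jacobson {e : A} (he : IsIdempotentElem e)
    (hjac : ∀ i, b.repr e i ∈ (⊥ : Ideal R).jacobson) : e = 0 := by
  let I : Ideal R := Ideal.span (Set.range (b.repr e))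
  have hI : ∀ i, b.repr e i ∈ I := fun i ↦ Ideal.subset_span ⟨i, rfl⟩
  have hfg : I.FG := Submodule.fg_span (b.repr e).finite_range
  have hle : I ≤ I * I := Ideal.span_le.mpr <| Set.range_subset_iff.mpr fun i ↦ by
    rw [← he.eq]
    exact basis_repr_mul_mem_mul b hI hI i
  have hIjac : I ≤ (⊥ : Ideal R).jacobson := Ideal.span_le.mpr (Set.range_subset_iff.mpr hjac)
  have hbot : I = ⊥ := Submodule.eq_bot_of_le_smul_of_le_jacobson_bot I I hfg hle hIjac
  refine b.repr.map_eq_zero_iff.mp (Finsupp.ext fun i ↦ Ideal.mem_bot.mp ?_)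
  exact hbot ▸ hI i

end Idempotent

theorem matrix_basis_repr_apply {ι R M m n : Type*} [Fintype m] [Fintype n] [Semiring R]
    [AddCommMonoid M] [Module R M] (b : Basis ι R M) (X : Matrix m n M) (i : m) (j : n) (k : ι) :
    (b.matrix m n).repr X (i, j, k) = b.repr (X i j) k := by
  simp [Basis.matrix, Basis.repr_reindex_apply, Pi.basis_repr, -Basis.repr_reindex]

section MonoidAlgebra

variable {R K G : Type*} [CommRing R] [Ring K] [Algebra R K] [Monoid G]

theorem mem_range_monoidAlgebra_mapRingHom {S : Type*} [Ring S] {f : S →+* K}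
    {x : MonoidAlgebra K G} (hx : ∀ g ∈ x.coeff.support, x.coeff g ∈ f.range) :
    x ∈ (MonoidAlgebra.mapRingHom G f).range := by
  rw [← MonoidAlgebra.sum_coeff_single x]
  refine sum_mem fun g hg ↦ ?_
  obtain ⟨s, hs⟩ := hx g hg
  exact ⟨MonoidAlgebra.single g s, by simp [hs]⟩

variable (R) in
theorem exists_fg_subalgebra_subset_range_mapRingHom {X : Set (MonoidAlgebra K G)}
    (hX : X.Finite) : ∃ S : Subalgebra R K, S.FG ∧
      X ⊆ (MonoidAlgebra.mapRingHom G S.val.toRingHom).range := by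
  let T : Set K := ⋃ x ∈ X, x.coeff '' x.coeff.support
  have hT : T.Finite := hX.biUnion fun x _ ↦ (Finset.finite_toSet _).image _
  refine ⟨Algebra.adjoin R T, Subalgebra.fg_def.mpr ⟨T, hT, rfl⟩, fun x hx ↦
    mem_range_monoidAlgebra_mapRingHom fun g hg ↦ ?_⟩
  have hgT : x.coeff g ∈ T := Set.mem_biUnion hx ⟨g, hg, rfl⟩
  exact ⟨⟨x.coeff g, Algebra.subset_adjoin hgT⟩, rfl⟩

variable (R) in
theorem isStablyFinite_monoidAlgebra_of_forall_fg_subalgebra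
    (h : ∀ S : Subalgebra R K, S.FG → IsStablyFinite (MonoidAlgebra S G)) :
    IsStablyFinite (MonoidAlgebra K G) := by
  intro d hd A B hAB
  obtain ⟨S, hS, hentries⟩ := exists_fg_subalgebra_subset_range_mapRingHom R
    ((Set.finite_range (Function.uncurry A)).union (Set.finite_range (Function.uncurry B)))
  choose A' hA' using fun i j ↦ hentries (.inl ⟨(i, j), rfl⟩)
  choose B' hB' using fun i j ↦ hentries (.inr ⟨(i, j), rfl⟩)
  let φ := (MonoidAlgebra.mapRingHom G S.val.toRingHom).mapMatrix (m := Fin d)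
  have hφ : Function.Injective φ :=
    Matrix.map_injective (MonoidAlgebra.map_injective _ Subtype.val_injective)
  obtain rfl : φ (.of A') = A := Matrix.ext hA'
  obtain rfl : φ (.of B') = B := Matrix.ext hB'
  have hAB' : Matrix.of A' * Matrix.of B' = 1 := hφ (by rw [map_mul, hAB, map_one])
  rw [← map_mul, h S hS d hd _ _ hAB', map_one]

theorem isStablyFinite_monoidAlgebra_of_finiteType_int {S : Type*} [CommRing S]
    [Algebra.FiniteType ℤ S]
    (h : ∀ (F : Type) [Field F] [Finite F], IsStablyFinite (MonoidAlgebra F G)) :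
    IsStablyFinite (MonoidAlgebra S G) := by
  intro d hd A B hAB
  have hidem : IsIdempotentElem (1 - B * A) :=
    IsIdempotentElem.one_sub <| calc
      B * A * (B * A) = B * (A * B) * A := by simp only [mul_assoc]
      _ = B * A := by rw [hAB, mul_one]
  have hjac : ∀ i j g, ((1 - B * A) i j).coeff g ∈ (⊥ : Ideal S).jacobson := by
    intro i j g
    by_contra hc
    obtain ⟨F, _, _, f, hf⟩ := exists_ringHom_finite_field_ne_zero hc
    let ψ := (MonoidAlgebra.mapRingHom G f).mapMatrix (m := Fin d)
    have hBA : ψ B * ψ A = 1 := h F d hd _ _ (by rw [← map_mul, hAB, map_one])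
    have hψ : ψ (1 - B * A) = 0 := by rw [map_sub, map_one, map_mul, hBA, sub_self]
    have hcoeff : f (((1 - B * A) i j).coeff g) = (ψ (1 - B * A) i j).coeff g := by simp [ψ]
    exact hf (by rw [hcoeff, hψ]; simp)
  have hzero : 1 - B * A = 0 :=
    eq_zero_of_isIdempotentElem_of_basis_repr_mem_jacobson
      ((MonoidAlgebra.basis G S).matrix (Fin d) (Fin d)) hidem fun ⟨i, j, g⟩ ↦ by
        rw [matrix_basis_repr_apply]
        exact hjac i j g
  exact (sub_eq_zero.mp hzero).symm

end MonoidAlgebra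

theorem stably_finite_char_zero_of_finite_fields_stably_finite_general
    {G : Type*} [Monoid G]
    (h : ∀ (F : Type) [Field F] [Finite F], IsStablyFinite (MonoidAlgebra F G)) :
    ∀ (K : Type*) [CommRing K], IsStablyFinite (MonoidAlgebra K G) := by
  intro K _
  refine isStablyFinite_monoidAlgebra_of_forall_fg_subalgebra ℤ fun S hS ↦ ?_
  have : Algebra.FiniteType ℤ S := S.fg_iff_finiteType.mp hS
  exact isStablyFinite_monoidAlgebra_of_finiteType_int h

theorem stably_finite_char_zero_of_finite_fields_stably_finite
    {G : Type*} [Group G]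
    (h : ∀ (F : Type) [Field F] [Finite F], IsStablyFinite (MonoidAlgebra F G)) :
    ∀ (K : Type*) [Field K] [IsAlgClosed K] [CharZero K],
      IsStablyFinite (MonoidAlgebra K G) := by
  intro K _ _ _
  exact stably_finite_char_zero_of_finite_fields_stably_finite_general h K
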